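/- There exists a monoid homomorphism θ from the tied braid monoid TB_n^B of type B to the multiplicative monoid of the bt-algebra E_n^B(u,v) of type B determined by θ(σ_i) = T_i, θ(σ_i^{-1}) = T_i − (u − u^{-1})E_i, θ(ρ_1) = B_1, θ(ρ_1^{-1}) = B_1 − (v − v^{-1})F_1, θ(η_i) = E_i, and θ(φ_1) = F_1; i.e., these images satisfy all defining relations of TB_n^B. -/

import Mathlib

/-! The tied braid monoid of type B, `TBₙᴮ`, presented by generators and relations. -/

/-- Generators of the tied braid monoid of type B on `n` (moving) strands:
`sig i` is `σ_{i+1}`, `sigInv i` is `σ_{i+1}⁻¹`, `rho` is `ρ₁`, `rhoInv` is `ρ₁⁻¹`,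
`phi` is `φ₁` and `eta i` is `η_{i+1}` (for `i : Fin (n-1)`). -/
inductive TBGen (n : ℕ) : Type
  | sig : Fin (n - 1) → TBGen n
  | sigInv : Fin (n - 1) → TBGen n
  | rho : TBGen n
  | rhoInv : TBGen n
  | phi : TBGen n
  | eta : Fin (n - 1) → TBGen n

namespace TiedBraidB

variable (n : ℕ)

/-- The word `σᵢ` (for `1 ≤ i ≤ n-1`; junk value `1` otherwise). -/
def wσ (i : ℕ) : FreeMonoid (TBGen n) :=
  if h : 1 ≤ i ∧ i ≤ n - 1 then FreeMonoid.of (TBGen.sig ⟨i - 1, by omega⟩) else 1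

/-- The word `σᵢ⁻¹`. -/
def wσi (i : ℕ) : FreeMonoid (TBGen n) :=
  if h : 1 ≤ i ∧ i ≤ n - 1 then FreeMonoid.of (TBGen.sigInv ⟨i - 1, by omega⟩) else 1

/-- The word `ηᵢ`. -/
def wη (i : ℕ) : FreeMonoid (TBGen n) :=
  if h : 1 ≤ i ∧ i ≤ n - 1 then FreeMonoid.of (TBGen.eta ⟨i - 1, by omega⟩) else 1

/-- The word `ρ₁`. -/
def wρ : FreeMonoid (TBGen n) := FreeMonoid.of TBGen.rho

/-- The word `ρ₁⁻¹`. -/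
def wρi : FreeMonoid (TBGen n) := FreeMonoid.of TBGen.rhoInv

/-- The word `φ₁`. -/
def wφ : FreeMonoid (TBGen n) := FreeMonoid.of TBGen.phi

/-- The descending word `σₖ σₖ₋₁ ⋯ σ₁`. -/
def wσDesc : ℕ → FreeMonoid (TBGen n)
  | 0 => 1
  | k + 1 => wσ n (k + 1) * wσDesc k

/-- The ascending word `σ₁ σ₂ ⋯ σₖ`. -/
def wσAsc : ℕ → FreeMonoid (TBGen n)
  | 0 => 1
  | k + 1 => wσAsc k * wσ n (k + 1)

/-- The descending word `σₖ⁻¹ σₖ₋₁⁻¹ ⋯ σ₁⁻¹`. -/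
def wσiDesc : ℕ → FreeMonoid (TBGen n)
  | 0 => 1
  | k + 1 => wσi n (k + 1) * wσiDesc k

/-- The ascending word `σ₁⁻¹ σ₂⁻¹ ⋯ σₖ⁻¹`. -/
def wσiAsc : ℕ → FreeMonoid (TBGen n)
  | 0 => 1
  | k + 1 => wσiAsc k * wσi n (k + 1)

/-- The defining relations of the tied braid monoid `TBₙᴮ` of type B. -/
inductive tbRel : FreeMonoid (TBGen n) → FreeMonoid (TBGen n) → Prop
  | sig_inv (i : ℕ) (h1 : 1 ≤ i) (h2 : i ≤ n - 1) :
      tbRel (wσ n i * wσi n i) 1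
  | inv_sig (i : ℕ) (h1 : 1 ≤ i) (h2 : i ≤ n - 1) :
      tbRel (wσi n i * wσ n i) 1
  | rho_inv : tbRel (wρ n * wρi n) 1
  | inv_rho : tbRel (wρi n * wρ n) 1
  | sig_comm (i j : ℕ) (h1 : 1 ≤ i) (h2 : i + 1 < j) (h3 : j ≤ n - 1) :
      tbRel (wσ n i * wσ n j) (wσ n j * wσ n i)
  | sig_braid (i : ℕ) (h1 : 1 ≤ i) (h2 : i + 1 ≤ n - 1) :
      tbRel (wσ n i * wσ n (i + 1) * wσ n i) (wσ n (i + 1) * wσ n i * wσ n (i + 1))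
  | rho_sig (i : ℕ) (h1 : 2 ≤ i) (h2 : i ≤ n - 1) :
      tbRel (wρ n * wσ n i) (wσ n i * wρ n)
  | rho_sig_rho_sig (h : 2 ≤ n) :
      tbRel (wρ n * wσ n 1 * wρ n * wσ n 1) (wσ n 1 * wρ n * wσ n 1 * wρ n)
  | eta_comm (i j : ℕ) (h1 : 1 ≤ i) (h2 : i ≤ n - 1) (h3 : 1 ≤ j) (h4 : j ≤ n - 1) :
      tbRel (wη n i * wη n j) (wη n j * wη n i)
  | eta_sig (i : ℕ) (h1 : 1 ≤ i) (h2 : i ≤ n - 1) :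
      tbRel (wη n i * wσ n i) (wσ n i * wη n i)
  | eta_sig_far (i j : ℕ) (h1 : 1 ≤ i) (h2 : i ≤ n - 1) (h3 : 1 ≤ j) (h4 : j ≤ n - 1)
      (h5 : i + 1 < j ∨ j + 1 < i) :
      tbRel (wη n i * wσ n j) (wσ n j * wη n i)
  | eta_sig_sig (i j : ℕ) (h1 : 1 ≤ i) (h2 : i ≤ n - 1) (h3 : 1 ≤ j) (h4 : j ≤ n - 1)
      (h5 : j = i + 1 ∨ i = j + 1) :
      tbRel (wη n i * wσ n j * wσ n i) (wσ n j * wσ n i * wη n j)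
  | eta_sig_sigInv (i j : ℕ) (h1 : 1 ≤ i) (h2 : i ≤ n - 1) (h3 : 1 ≤ j) (h4 : j ≤ n - 1)
      (h5 : j = i + 1 ∨ i = j + 1) :
      tbRel (wη n i * wσ n j * wσi n i) (wσ n j * wσi n i * wη n j)
  | eta_eta_sig (i j : ℕ) (h1 : 1 ≤ i) (h2 : i ≤ n - 1) (h3 : 1 ≤ j) (h4 : j ≤ n - 1)
      (h5 : j = i + 1 ∨ i = j + 1) :
      tbRel (wη n i * wη n j * wσ n i) (wσ n i * wη n i * wη n j)
  | eta_eta_sig' (i j : ℕ) (h1 : 1 ≤ i) (h2 : i ≤ n - 1) (h3 : 1 ≤ j) (h4 : j ≤ n - 1)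
      (h5 : j = i + 1 ∨ i = j + 1) :
      tbRel (wη n i * wη n j * wσ n i) (wη n j * wσ n i * wη n j)
  | eta_idem (i : ℕ) (h1 : 1 ≤ i) (h2 : i ≤ n - 1) :
      tbRel (wη n i * wη n i) (wη n i)
  | phi_idem : tbRel (wφ n * wφ n) (wφ n)
  | rho_eta (i : ℕ) (h1 : 1 ≤ i) (h2 : i ≤ n - 1) :
      tbRel (wρ n * wη n i) (wη n i * wρ n)
  | rho_phi : tbRel (wρ n * wφ n) (wφ n * wρ n)
  | phi_eta (i : ℕ) (h1 : 1 ≤ i) (h2 : i ≤ n - 1) :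
      tbRel (wφ n * wη n i) (wη n i * wφ n)
  | phi_sig (i : ℕ) (h1 : 2 ≤ i) (h2 : i ≤ n - 1) :
      tbRel (wφ n * wσ n i) (wσ n i * wφ n)
  | phi_move (i : ℕ) (h1 : 2 ≤ i) (h2 : i ≤ n) :
      tbRel (wσDesc n (i - 1) * wφ n * wσiAsc n (i - 1))
        (wσiDesc n (i - 1) * wφ n * wσAsc n (i - 1))
  | phi_eta_one (h : 2 ≤ n) :
      tbRel (wφ n * wη n 1) (wφ n * wσ n 1 * wφ n * wσi n 1)
  | phi_eta_one' (h : 2 ≤ n) :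
      tbRel (wφ n * wσ n 1 * wφ n * wσi n 1) (wσ n 1 * wφ n * wσi n 1 * wη n 1)

/-- The tied braid monoid of type B on `n` strands. -/
def TB : Type := (conGen (tbRel n)).Quotient

instance : Monoid (TB n) := inferInstanceAs (Monoid (conGen (tbRel n)).Quotient)

/-- The canonical projection from the free monoid on the generators onto `TBₙᴮ`. -/
def mk : FreeMonoid (TBGen n) →* TB n := Con.mk' _

/-- The generator `σᵢ` of `TBₙᴮ`. -/
def σB (i : ℕ) : TB n := mk n (wσ n i)

/-- The generator `σᵢ⁻¹` of `TBₙᴮ`. -/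
def σiB (i : ℕ) : TB n := mk n (wσi n i)

/-- The generator `ρ₁` of `TBₙᴮ`. -/
def ρB : TB n := mk n (wρ n)

/-- The generator `ρ₁⁻¹` of `TBₙᴮ`. -/
def ρiB : TB n := mk n (wρi n)

/-- The generator `φ₁` of `TBₙᴮ`. -/
def φB : TB n := mk n (wφ n)

/-- The generator `ηᵢ` of `TBₙᴮ`. -/
def ηB (i : ℕ) : TB n := mk n (wη n i)

/-- The word `σᵢ σᵢ₊₁ ⋯ σₖ` (empty if `k < i`). -/
def wσRange (i k : ℕ) : FreeMonoid (TBGen n) :=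
  ((List.range' i (k + 1 - i)).map (wσ n)).prod

/-- The word `σₖ⁻¹ σₖ₋₁⁻¹ ⋯ σᵢ⁻¹` (empty if `k < i`). -/
def wσiRangeRev (i k : ℕ) : FreeMonoid (TBGen n) :=
  ((List.range' i (k + 1 - i)).reverse.map (wσi n)).prod

/-- The word representing the generalized tie `η_{i,j}`:
`σᵢ ⋯ σ_{j-2} η_{j-1} σ_{j-2}⁻¹ ⋯ σᵢ⁻¹` for `i < j`, with the conventions
`η_{i,i} = 1` and `η_{j,i} = η_{i,j}`. -/
def wηg (i j : ℕ) : FreeMonoid (TBGen n) :=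
  if i = j then 1
  else wσRange n (min i j) (max i j - 2) * wη n (max i j - 1) *
    wσiRangeRev n (min i j) (max i j - 2)

/-- The word representing the generalized tie `φⱼ = σ_{j-1} ⋯ σ₁ φ₁ σ₁⁻¹ ⋯ σ_{j-1}⁻¹`. -/
def wφg (j : ℕ) : FreeMonoid (TBGen n) :=
  wσDesc n (j - 1) * wφ n * wσiAsc n (j - 1)

/-- The generalized tie `η_{i,j}` joining the `i`-th and `j`-th moving strands. -/
def ηg (i j : ℕ) : TB n := mk n (wηg n i j)

/-- The generalized tie `φⱼ` joining the fixed strand and the `j`-th moving strand. -/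
def φg (j : ℕ) : TB n := mk n (wφg n j)

end TiedBraidB

/-! The bt-algebra of type B, `Eₙᴮ(u,v)`, presented by generators and relations. -/

/-- Generators of the bt-algebra of type B: `B` is `B₁`, `T i` is `T_{i+1}`,
`F i` is `F_{i+1}` and `E i` is `E_{i+1}`. -/
inductive BtGen (n : ℕ) : Type
  | B : BtGen n
  | T : Fin (n - 1) → BtGen n
  | F : Fin n → BtGen n
  | E : Fin (n - 1) → BtGen n

namespace BtAlgebraB

variable (K : Type*) [Field K] (u v : K) (n : ℕ)

/-- The free-algebra element `Tᵢ` (for `1 ≤ i ≤ n-1`; junk value `0` otherwise). -/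
def fT (i : ℕ) : FreeAlgebra K (BtGen n) :=
  if h : 1 ≤ i ∧ i ≤ n - 1 then FreeAlgebra.ι K (BtGen.T ⟨i - 1, by omega⟩) else 0

/-- The free-algebra element `Eᵢ`. -/
def fE (i : ℕ) : FreeAlgebra K (BtGen n) :=
  if h : 1 ≤ i ∧ i ≤ n - 1 then FreeAlgebra.ι K (BtGen.E ⟨i - 1, by omega⟩) else 0

/-- The free-algebra element `Fᵢ` (for `1 ≤ i ≤ n`). -/
def fF (i : ℕ) : FreeAlgebra K (BtGen n) :=
  if h : 1 ≤ i ∧ i ≤ n then FreeAlgebra.ι K (BtGen.F ⟨i - 1, by omega⟩) else 0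

/-- The free-algebra element `B₁`. -/
def fB : FreeAlgebra K (BtGen n) := FreeAlgebra.ι K BtGen.B

/-- The defining relations of the bt-algebra `Eₙᴮ(u,v)` of type B. -/
inductive btRel : FreeAlgebra K (BtGen n) → FreeAlgebra K (BtGen n) → Prop
  | T_comm (i j : ℕ) (h1 : 1 ≤ i) (h2 : i + 1 < j) (h3 : j ≤ n - 1) :
      btRel (fT K n i * fT K n j) (fT K n j * fT K n i)
  | T_braid (i : ℕ) (h1 : 1 ≤ i) (h2 : i + 1 ≤ n - 1) :
      btRel (fT K n i * fT K n (i + 1) * fT K n i)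
        (fT K n (i + 1) * fT K n i * fT K n (i + 1))
  | T_sq (i : ℕ) (h1 : 1 ≤ i) (h2 : i ≤ n - 1) :
      btRel (fT K n i * fT K n i)
        (1 + algebraMap K (FreeAlgebra K (BtGen n)) (u - u⁻¹) * (fE K n i * fT K n i))
  | E_idem (i : ℕ) (h1 : 1 ≤ i) (h2 : i ≤ n - 1) :
      btRel (fE K n i * fE K n i) (fE K n i)
  | E_comm (i j : ℕ) (h1 : 1 ≤ i) (h2 : i ≤ n - 1) (h3 : 1 ≤ j) (h4 : j ≤ n - 1) :
      btRel (fE K n i * fE K n j) (fE K n j * fE K n i)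
  | E_T (i : ℕ) (h1 : 1 ≤ i) (h2 : i ≤ n - 1) :
      btRel (fE K n i * fT K n i) (fT K n i * fE K n i)
  | E_T_far (i j : ℕ) (h1 : 1 ≤ i) (h2 : i ≤ n - 1) (h3 : 1 ≤ j) (h4 : j ≤ n - 1)
      (h5 : i + 1 < j ∨ j + 1 < i) :
      btRel (fE K n i * fT K n j) (fT K n j * fE K n i)
  | E_E_T (i j : ℕ) (h1 : 1 ≤ i) (h2 : i ≤ n - 1) (h3 : 1 ≤ j) (h4 : j ≤ n - 1)
      (h5 : j = i + 1 ∨ i = j + 1) :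
      btRel (fE K n i * fE K n j * fT K n i) (fT K n i * fE K n i * fE K n j)
  | E_E_T' (i j : ℕ) (h1 : 1 ≤ i) (h2 : i ≤ n - 1) (h3 : 1 ≤ j) (h4 : j ≤ n - 1)
      (h5 : j = i + 1 ∨ i = j + 1) :
      btRel (fE K n i * fE K n j * fT K n i) (fE K n j * fT K n i * fE K n j)
  | E_T_T (i j : ℕ) (h1 : 1 ≤ i) (h2 : i ≤ n - 1) (h3 : 1 ≤ j) (h4 : j ≤ n - 1)
      (h5 : j = i + 1 ∨ i = j + 1) :
      btRel (fE K n i * fT K n j * fT K n i) (fT K n j * fT K n i * fE K n j)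
  | B_T_B_T (h : 2 ≤ n) :
      btRel (fB K n * fT K n 1 * fB K n * fT K n 1)
        (fT K n 1 * fB K n * fT K n 1 * fB K n)
  | B_T (i : ℕ) (h1 : 2 ≤ i) (h2 : i ≤ n - 1) :
      btRel (fB K n * fT K n i) (fT K n i * fB K n)
  | B_sq :
      btRel (fB K n * fB K n)
        (1 + algebraMap K (FreeAlgebra K (BtGen n)) (v - v⁻¹) * (fF K n 1 * fB K n))
  | B_E (i : ℕ) (h1 : 1 ≤ i) (h2 : i ≤ n - 1) :
      btRel (fB K n * fE K n i) (fE K n i * fB K n)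
  | F_idem (i : ℕ) (h1 : 1 ≤ i) (h2 : i ≤ n) :
      btRel (fF K n i * fF K n i) (fF K n i)
  | B_F (j : ℕ) (h1 : 1 ≤ j) (h2 : j ≤ n) :
      btRel (fB K n * fF K n j) (fF K n j * fB K n)
  | F_E (i j : ℕ) (h1 : 1 ≤ i) (h2 : i ≤ n) (h3 : 1 ≤ j) (h4 : j ≤ n - 1) :
      btRel (fF K n i * fE K n j) (fE K n j * fF K n i)
  | F_T (i j : ℕ) (h1 : 1 ≤ i) (h2 : i ≤ n - 1) (h3 : 1 ≤ j) (h4 : j ≤ n) :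
      btRel (fF K n j * fT K n i)
        (fT K n i * fF K n (if j = i then i + 1 else if j = i + 1 then i else j))
  | E_F (i : ℕ) (h1 : 1 ≤ i) (h2 : i ≤ n - 1) :
      btRel (fE K n i * fF K n i) (fF K n i * fF K n (i + 1))
  | E_F' (i : ℕ) (h1 : 1 ≤ i) (h2 : i ≤ n - 1) :
      btRel (fF K n i * fF K n (i + 1)) (fE K n i * fF K n (i + 1))

/-- The bt-algebra `Eₙᴮ(u,v)` of type B. -/
abbrev BtB := RingQuot (btRel K u v n)

/-- The canonical projection onto `Eₙᴮ(u,v)`. -/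
def mkBt : FreeAlgebra K (BtGen n) →ₐ[K] BtB K u v n := RingQuot.mkAlgHom K _

/-- The generator `Tᵢ` of `Eₙᴮ(u,v)`. -/
def genT (i : ℕ) : BtB K u v n := mkBt K u v n (fT K n i)

/-- The generator `Eᵢ` of `Eₙᴮ(u,v)`. -/
def genE (i : ℕ) : BtB K u v n := mkBt K u v n (fE K n i)

/-- The generator `Fᵢ` of `Eₙᴮ(u,v)`. -/
def genF (i : ℕ) : BtB K u v n := mkBt K u v n (fF K n i)

/-- The generator `B₁` of `Eₙᴮ(u,v)`. -/
def genB : BtB K u v n := mkBt K u v n (fB K n)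

/-- The element `Tᵢ⁻¹ = Tᵢ - (u - u⁻¹) Eᵢ` of `Eₙᴮ(u,v)`. -/
def genTinv (i : ℕ) : BtB K u v n :=
  genT K u v n i - algebraMap K (BtB K u v n) (u - u⁻¹) * genE K u v n i

end BtAlgebraB

namespace BtRep
open TiedBraidB BtAlgebraB

variable (K : Type*) [Field K] (u v : K) (n : ℕ)

/-- Images of the generators. -/
noncomputable def genImg : TBGen n → BtB K u v n
  | .sig i => genT K u v n (i + 1)
  | .sigInv i => genTinv K u v n (i + 1)
  | .rho => genB K u v n
  | .rhoInv => genB K u v n - algebraMap K (BtB K u v n) (v - v⁻¹) * genF K u v n 1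
  | .phi => genF K u v n 1
  | .eta i => genE K u v n (i + 1)

/-- The homomorphism on the free monoid. -/
noncomputable def lft : FreeMonoid (TBGen n) →* BtB K u v n := FreeMonoid.lift (genImg K u v n)

variable {K u v n}

lemma rel {a b} (h : btRel K u v n a b) : mkBt K u v n a = mkBt K u v n b :=
  RingQuot.mkAlgHom_rel K h

lemma lft_σ {i : ℕ} (h1 : 1 ≤ i) (h2 : i ≤ n - 1) :
    lft K u v n (wσ n i) = genT K u v n i := by
  rw [wσ, dif_pos ⟨h1, h2⟩, lft, FreeMonoid.lift_eval_of, genImg]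
  simp only [Nat.sub_add_cancel h1]

lemma lft_σi {i : ℕ} (h1 : 1 ≤ i) (h2 : i ≤ n - 1) :
    lft K u v n (wσi n i) = genTinv K u v n i := by
  rw [wσi, dif_pos ⟨h1, h2⟩, lft, FreeMonoid.lift_eval_of, genImg]
  simp only [Nat.sub_add_cancel h1]

lemma lft_η {i : ℕ} (h1 : 1 ≤ i) (h2 : i ≤ n - 1) :
    lft K u v n (wη n i) = genE K u v n i := by
  rw [wη, dif_pos ⟨h1, h2⟩, lft, FreeMonoid.lift_eval_of, genImg]
  simp only [Nat.sub_add_cancel h1]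

lemma lft_ρ : lft K u v n (wρ n) = genB K u v n := by
  rw [wρ, lft, FreeMonoid.lift_eval_of, genImg]

lemma lft_ρi : lft K u v n (wρi n) =
    genB K u v n - algebraMap K (BtB K u v n) (v - v⁻¹) * genF K u v n 1 := by
  rw [wρi, lft, FreeMonoid.lift_eval_of, genImg]

lemma lft_φ : lft K u v n (wφ n) = genF K u v n 1 := by
  rw [wφ, lft, FreeMonoid.lift_eval_of, genImg]

lemma T_sq {i : ℕ} (h1 : 1 ≤ i) (h2 : i ≤ n - 1) :
    genT K u v n i * genT K u v n i =
      1 + algebraMap K (BtB K u v n) (u - u⁻¹) * (genE K u v n i * genT K u v n i) := by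
  have := rel (btRel.T_sq (u := u) (v := v) i h1 h2)
  rwa [map_mul, map_add, map_one, map_mul, map_mul, AlgHom.commutes] at this

lemma E_T {i : ℕ} (h1 : 1 ≤ i) (h2 : i ≤ n - 1) :
    genE K u v n i * genT K u v n i = genT K u v n i * genE K u v n i := by
  have := rel (btRel.E_T (u := u) (v := v) i h1 h2)
  rwa [map_mul, map_mul] at this

lemma T_Tinv {i : ℕ} (h1 : 1 ≤ i) (h2 : i ≤ n - 1) :
    genT K u v n i * genTinv K u v n i = 1 := by
  rw [genTinv, mul_sub, T_sq h1 h2, ← mul_assoc (genT K u v n i), ← Algebra.commutes, mul_assoc, E_T h1 h2]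
  simp

lemma Tinv_T {i : ℕ} (h1 : 1 ≤ i) (h2 : i ≤ n - 1) :
    genTinv K u v n i * genT K u v n i = 1 := by
  rw [genTinv, sub_mul, T_sq h1 h2, mul_assoc]
  simp

lemma B_sq : genB K u v n * genB K u v n =
      1 + algebraMap K (BtB K u v n) (v - v⁻¹) * (genF K u v n 1 * genB K u v n) := by
  have := rel (btRel.B_sq (K := K) (n := n) (u := u) (v := v))
  rwa [map_mul, map_add, map_one, map_mul, map_mul, AlgHom.commutes] at this

lemma B_F : genB K u v n * genF K u v n 1 = genF K u v n 1 * genB K u v n := by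
  rcases Nat.eq_zero_or_pos n with rfl | hn
  · simp [genF, fF]
  have := rel (btRel.B_F (K := K) (u := u) (v := v) 1 le_rfl hn)
  rwa [map_mul, map_mul] at this

lemma F_idem : genF K u v n 1 * genF K u v n 1 = genF K u v n 1 := by
  rcases Nat.eq_zero_or_pos n with rfl | hn
  · simp [genF, fF]
  have := rel (btRel.F_idem (K := K) (u := u) (v := v) 1 le_rfl hn)
  rwa [map_mul] at this

lemma F_T {i : ℕ} (h1 : 1 ≤ i) (h2 : i ≤ n - 1) :
    genF K u v n i * genT K u v n i = genT K u v n i * genF K u v n (i + 1) := by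
  have := rel (btRel.F_T (K := K) (u := u) (v := v) i i h1 h2 h1 (by omega))
  rwa [map_mul, map_mul, if_pos rfl] at this

lemma F_T' {i : ℕ} (h1 : 1 ≤ i) (h2 : i ≤ n - 1) :
    genF K u v n (i + 1) * genT K u v n i = genT K u v n i * genF K u v n i := by
  have := rel (btRel.F_T (K := K) (u := u) (v := v) i (i + 1) h1 h2 (by omega) (by omega))
  rwa [map_mul, map_mul, if_neg (by omega), if_pos rfl] at this

lemma T_F_Tinv {i : ℕ} (h1 : 1 ≤ i) (h2 : i ≤ n - 1) :
    genT K u v n i * genF K u v n i * genTinv K u v n i = genF K u v n (i + 1) := by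
  rw [← F_T' h1 h2, mul_assoc, T_Tinv h1 h2, mul_one]

lemma Tinv_F_T {i : ℕ} (h1 : 1 ≤ i) (h2 : i ≤ n - 1) :
    genTinv K u v n i * genF K u v n i * genT K u v n i = genF K u v n (i + 1) := by
  rw [mul_assoc, F_T h1 h2, ← mul_assoc, Tinv_T h1 h2, one_mul]

lemma move (k : ℕ) (hk : k ≤ n - 1) :
    lft K u v n (wσDesc n k * wφ n * wσiAsc n k) = genF K u v n (k + 1) := by
  induction k with
  | zero => simp [wσDesc, wσiAsc, lft_φ]
  | succ k ih =>
    have h := ih (by omega)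
    rw [wσDesc, wσiAsc, ← T_F_Tinv (by omega) hk, ← h, ← lft_σ (by omega) hk,
      ← lft_σi (by omega) hk, ← map_mul, ← map_mul]
    simp only [mul_assoc]

lemma move' (k : ℕ) (hk : k ≤ n - 1) :
    lft K u v n (wσiDesc n k * wφ n * wσAsc n k) = genF K u v n (k + 1) := by
  induction k with
  | zero => simp [wσiDesc, wσAsc, lft_φ]
  | succ k ih =>
    have h := ih (by omega)
    rw [wσiDesc, wσAsc, ← Tinv_F_T (by omega) hk, ← h, ← lft_σ (by omega) hk,
      ← lft_σi (by omega) hk, ← map_mul, ← map_mul]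
    simp only [mul_assoc]

lemma E_T_Tinv (i j : ℕ) (h1 : 1 ≤ i) (h2 : i ≤ n - 1) (h3 : 1 ≤ j) (h4 : j ≤ n - 1)
    (h5 : j = i + 1 ∨ i = j + 1) :
    genE K u v n i * genT K u v n j * genTinv K u v n i =
      genT K u v n j * genTinv K u v n i * genE K u v n j := by
  have a := rel (btRel.E_T_T (K := K) (u := u) (v := v) i j h1 h2 h3 h4 h5)
  have b := rel (btRel.E_E_T (K := K) (u := u) (v := v) j i h3 h4 h1 h2 h5.symm)
  have c := rel (btRel.E_E_T' (K := K) (u := u) (v := v) j i h3 h4 h1 h2 h5.symm)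
  have d := rel (btRel.E_comm (K := K) (u := u) (v := v) j i h3 h4 h1 h2)
  simp only [map_mul] at a b c d
  change genE K u v n i * genT K u v n j * genT K u v n i =
    genT K u v n j * genT K u v n i * genE K u v n j at a
  change genE K u v n j * genE K u v n i * genT K u v n j =
    genT K u v n j * genE K u v n j * genE K u v n i at b
  change genE K u v n j * genE K u v n i * genT K u v n j =
    genE K u v n i * genT K u v n j * genE K u v n i at c
  change genE K u v n j * genE K u v n i = genE K u v n i * genE K u v n j at d
  have e : genE K u v n i * genT K u v n j * genE K u v n i =
      genT K u v n j * genE K u v n i * genE K u v n j := by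
    rw [← c, b, mul_assoc, d, mul_assoc]
  simp only [genTinv, ← Algebra.smul_def, mul_sub, sub_mul, mul_smul_comm, smul_mul_assoc, a, e]

lemma F_T_F_Tinv (h : 2 ≤ n) :
    genF K u v n 1 * genT K u v n 1 * genF K u v n 1 * genTinv K u v n 1 =
      genF K u v n 1 * genF K u v n 2 := by
  rw [mul_assoc (genF K u v n 1), mul_assoc (genF K u v n 1),
    T_F_Tinv le_rfl (by omega)]

lemma respects {a b} (h : tbRel n a b) : lft K u v n a = lft K u v n b := by
  cases h with
  | sig_inv i h1 h2 => rw [map_mul, lft_σ h1 h2, lft_σi h1 h2, T_Tinv h1 h2, map_one]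
  | inv_sig i h1 h2 => rw [map_mul, lft_σ h1 h2, lft_σi h1 h2, Tinv_T h1 h2, map_one]
  | rho_inv =>
    rw [map_mul, lft_ρ, lft_ρi, mul_sub, B_sq, ← mul_assoc (genB K u v n), ← Algebra.commutes, mul_assoc, B_F]
    simp
  | inv_rho =>
    rw [map_mul, lft_ρ, lft_ρi, sub_mul, B_sq, mul_assoc]
    simp
  | sig_comm i j h1 h2 h3 =>
    simpa only [map_mul, genT, genE, genF, genB, genTinv, lft_σ h1 (show i ≤ n - 1 by omega), lft_σ (show 1 ≤ j by omega) h3] using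
      rel (btRel.T_comm (u := u) (v := v) i j h1 h2 h3)
  | sig_braid i h1 h2 =>
    simpa only [map_mul, genT, genE, genF, genB, genTinv, lft_σ h1 (show i ≤ n - 1 by omega), lft_σ (show 1 ≤ i + 1 by omega) h2] using
      rel (btRel.T_braid (u := u) (v := v) i h1 h2)
  | rho_sig i h1 h2 =>
    simpa only [map_mul, genT, genE, genF, genB, genTinv, lft_ρ, lft_σ (show 1 ≤ i by omega) h2] using
      rel (btRel.B_T (u := u) (v := v) i h1 h2)
  | rho_sig_rho_sig h =>
    simpa only [map_mul, genT, genE, genF, genB, genTinv, lft_ρ, lft_σ le_rfl (show 1 ≤ n - 1 by omega)] using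
      rel (btRel.B_T_B_T (u := u) (v := v) h)
  | eta_comm i j h1 h2 h3 h4 =>
    simpa only [map_mul, genT, genE, genF, genB, genTinv, lft_η h1 h2, lft_η h3 h4] using
      rel (btRel.E_comm (u := u) (v := v) i j h1 h2 h3 h4)
  | eta_sig i h1 h2 =>
    rw [map_mul, map_mul, lft_η h1 h2, lft_σ h1 h2, E_T h1 h2]
  | eta_sig_far i j h1 h2 h3 h4 h5 =>
    simpa only [map_mul, genT, genE, genF, genB, genTinv, lft_η h1 h2, lft_σ h3 h4] using
      rel (btRel.E_T_far (u := u) (v := v) i j h1 h2 h3 h4 h5)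
  | eta_sig_sig i j h1 h2 h3 h4 h5 =>
    simpa only [map_mul, genT, genE, genF, genB, genTinv, lft_η h1 h2, lft_η h3 h4, lft_σ h1 h2, lft_σ h3 h4] using
      rel (btRel.E_T_T (u := u) (v := v) i j h1 h2 h3 h4 h5)
  | eta_sig_sigInv i j h1 h2 h3 h4 h5 =>
    simpa only [map_mul, genT, genE, genF, genB, genTinv, lft_η h1 h2, lft_η h3 h4, lft_σi h1 h2, lft_σ h3 h4] using
      E_T_Tinv i j h1 h2 h3 h4 h5
  | eta_eta_sig i j h1 h2 h3 h4 h5 =>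
    simpa only [map_mul, genT, genE, genF, genB, genTinv, lft_η h1 h2, lft_η h3 h4, lft_σ h1 h2, lft_σ h3 h4] using
      rel (btRel.E_E_T (u := u) (v := v) i j h1 h2 h3 h4 h5)
  | eta_eta_sig' i j h1 h2 h3 h4 h5 =>
    simpa only [map_mul, genT, genE, genF, genB, genTinv, lft_η h1 h2, lft_η h3 h4, lft_σ h1 h2, lft_σ h3 h4] using
      rel (btRel.E_E_T' (u := u) (v := v) i j h1 h2 h3 h4 h5)
  | eta_idem i h1 h2 =>
    simpa only [map_mul, genT, genE, genF, genB, genTinv, lft_η h1 h2] using rel (btRel.E_idem (u := u) (v := v) i h1 h2)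
  | phi_idem => rw [map_mul, lft_φ, F_idem]
  | rho_eta i h1 h2 =>
    simpa only [map_mul, genT, genE, genF, genB, genTinv, lft_ρ, lft_η h1 h2] using rel (btRel.B_E (u := u) (v := v) i h1 h2)
  | rho_phi => rw [map_mul, map_mul, lft_ρ, lft_φ, B_F]
  | phi_eta i h1 h2 =>
    simpa only [map_mul, genT, genE, genF, genB, genTinv, lft_φ, lft_η h1 h2] using
      rel (btRel.F_E (u := u) (v := v) 1 i le_rfl (by omega) h1 h2)
  | phi_sig i h1 h2 =>
    have := rel (btRel.F_T (K := K) (u := u) (v := v) i 1 (by omega) h2 le_rfl (by omega))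
    rw [if_neg (by omega), if_neg (by omega)] at this
    simpa only [map_mul, genT, genE, genF, genB, genTinv, lft_φ, lft_σ (show 1 ≤ i by omega) h2] using this
  | phi_move i h1 h2 => rw [move _ (by omega), move' _ (by omega)]
  | phi_eta_one h =>
    have h2 : 1 ≤ n - 1 := by omega
    have a := rel (btRel.E_F (K := K) (u := u) (v := v) 1 le_rfl h2)
    have b := rel (btRel.F_E (K := K) (u := u) (v := v) 1 1 le_rfl (by omega) le_rfl h2)
    simp only [map_mul] at a b
    simp only [map_mul, lft_φ, lft_η le_rfl h2, lft_σ le_rfl h2, lft_σi le_rfl h2, F_T_F_Tinv h]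
    exact b.trans a
  | phi_eta_one' h =>
    have h2 : 1 ≤ n - 1 := by omega
    have a := rel (btRel.E_F' (K := K) (u := u) (v := v) 1 le_rfl h2)
    have b := rel (btRel.F_E (K := K) (u := u) (v := v) 2 1 (by omega) h le_rfl h2)
    simp only [map_mul] at a b
    simp only [map_mul, lft_φ, lft_η le_rfl h2, lft_σ le_rfl h2, lft_σi le_rfl h2, F_T_F_Tinv h,
      T_F_Tinv le_rfl h2]
    exact a.trans b.symm

end BtRep

open TiedBraidB BtAlgebraB in
/-- There exists a monoid homomorphism `θ` from the tied braid
monoid `TBₙᴮ` of type B to the multiplicative monoid of the bt-algebra `Eₙᴮ(u,v)`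
of type B determined by `θ(σᵢ) = Tᵢ`, `θ(σᵢ⁻¹) = Tᵢ - (u - u⁻¹)Eᵢ`, `θ(ρ₁) = B₁`,
`θ(ρ₁⁻¹) = B₁ - (v - v⁻¹)F₁`, `θ(ηᵢ) = Eᵢ` and `θ(φ₁) = F₁`. -/
theorem exists_representation (K : Type*) [Field K] (u v : K) (hu : u ≠ 0) (hv : v ≠ 0)
    (n : ℕ) :
    ∃ θ : TB n →* BtB K u v n,
      (∀ (i : ℕ) (_h1 : 1 ≤ i) (_h2 : i ≤ n - 1), θ (σB n i) = genT K u v n i) ∧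
      (∀ (i : ℕ) (_h1 : 1 ≤ i) (_h2 : i ≤ n - 1),
        θ (σiB n i) =
          genT K u v n i - algebraMap K (BtB K u v n) (u - u⁻¹) * genE K u v n i) ∧
      θ (ρB n) = genB K u v n ∧
      θ (ρiB n) =
        genB K u v n - algebraMap K (BtB K u v n) (v - v⁻¹) * genF K u v n 1 ∧
      (∀ (i : ℕ) (_h1 : 1 ≤ i) (_h2 : i ≤ n - 1), θ (ηB n i) = genE K u v n i) ∧
      θ (φB n) = genF K u v n 1 := by
  have hle : conGen (tbRel n) ≤ Con.ker (BtRep.lft K u v n) :=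
    Con.conGen_le.2 fun _ _ h => BtRep.respects h
  let θ : TB n →* BtB K u v n := Con.lift (conGen (tbRel n)) (BtRep.lft K u v n) hle
  have key : ∀ w, θ (mk n w) = BtRep.lft K u v n w := fun w => Con.lift_mk' hle w
  refine ⟨θ, ?_, ?_, ?_, ?_, ?_, ?_⟩
  · intro i h1 h2
    exact (key _).trans (BtRep.lft_σ h1 h2)
  · intro i h1 h2
    exact (key _).trans (BtRep.lft_σi h1 h2)
  · exact (key _).trans BtRep.lft_ρ
  · exact (key _).trans BtRep.lft_ρi
  · intro i h1 h2
    exact (key _).trans (BtRep.lft_η h1 h2)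
  · exact (key _).trans BtRep.lft_φ
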